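/- The Galois group of f_δ over ℚ is not a solvable group. -/

import Mathlib

open Polynomial in
/-- The degree-16 polynomial `f_δ`, regarded as a polynomial over ℚ. -/
noncomputable def fdeltaQ : Polynomial ℚ :=
  589824 * X ^ 16 - 7077888 * X ^ 15 + 41189376 * X ^ 14 - 154386432 * X ^ 13 +
    416788480 * X ^ 12 - 857112576 * X ^ 11 + 1383417856 * X ^ 10 - 1779354624 * X ^ 9 +
    1834437632 * X ^ 8 - 1514108928 * X ^ 7 + 992782336 * X ^ 6 - 509312064 * X ^ 5 +
    199354208 * X ^ 4 - 57160752 * X ^ 3 + 11200088 * X ^ 2 - 1313928 * X + 67417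

/-! ### Computing with polynomials modulo a monic polynomial over `ZMod p` -/

namespace FDelta

/-- Force evaluation of a natural number before continuing. -/
def force {α : Type} (n : ℕ) (k : ℕ → α) : α := Nat.rec (k 0) (fun m _ => k (m + 1)) n

theorem force_eq {α : Type} (n : ℕ) (k : ℕ → α) : force n k = k n := by
  cases n <;> rfl

/-- Force evaluation of a list of natural numbers before continuing. -/
def forceL {α : Type} : List ℕ → (List ℕ → α) → α
  | [], k => k []
  | x :: xs, k => force x fun y => forceL xs fun ys => k (y :: ys)

theorem forceL_eq {α : Type} (l : List ℕ) (k : List ℕ → α) : forceL l k = k l := by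
  induction l generalizing k with
  | nil => rfl
  | cons x xs ih => simp [forceL, force_eq, ih]

/-- `c * b + r` coefficientwise. -/
def addm (p c : ℕ) : List ℕ → List ℕ → List ℕ
  | b :: bs, r :: rs => ((c * b + r) % p) :: addm p c bs rs
  | _, _ => []

/-- shift by one and add `t * ns`. -/
def sh (p t : ℕ) : ℕ → List ℕ → List ℕ → List ℕ
  | prev, n :: ns, r :: rs => ((prev + t * n) % p) :: sh p t r ns rs
  | _, _, _ => []

/-- multiplication of residues by the Horner scheme; `ng` is minus the lower part of the modulus. -/
def mulp (p : ℕ) (ng : List ℕ) : List ℕ → List ℕ → List ℕ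
  | [], b => b.map fun _ => 0
  | c :: cs, b => forceL (mulp p ng cs b) fun r =>
      forceL (sh p (r.getLastD 0) 0 ng r) fun s => addm p c b s

/-- power with exponent in binary, least significant bit first -/
def powb (p : ℕ) (ng one : List ℕ) : List Bool → List ℕ → List ℕ
  | [], _ => one
  | b :: bs, l => forceL (powb p ng one bs l) fun r =>
      forceL (mulp p ng r r) fun s => match b with
        | true => mulp p ng s l
        | false => s

/-- value of a bit list -/
def bval : List Bool → ℕ
  | [] => 0
  | b :: bs => 2 * bval bs + (match b with | true => 1 | false => 0)

/-- successive multiples of `R` by powers of `h` -/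
def rows (p : ℕ) (ng h : List ℕ) : ℕ → List ℕ → List (List ℕ)
  | 0, _ => []
  | k + 1, R => forceL R fun R' => R' :: rows p ng h k (mulp p ng R' h)

/-- linear combination of rows -/
def app (p : ℕ) (zero : List ℕ) : List (List ℕ) → List ℕ → List ℕ
  | R :: Rs, c :: cs => forceL (app p zero Rs cs) fun s => addm p c R s
  | _, _ => zero

/-- iterated Frobenius -/
def frob (p : ℕ) (zero : List ℕ) (Rs : List (List ℕ)) : ℕ → List ℕ → List ℕ
  | 0, l => l
  | k + 1, l => forceL (app p zero Rs l) fun r => frob p zero Rs k r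

section semantics
variable {A : Type*} [CommRing A]

/-- evaluation of a coefficient list (constant term first) -/
def ev (a : A) : List ℕ → A
  | [] => 0
  | c :: cs => (c : A) + a * ev a cs

variable (p : ℕ) [CharP A p] (a : A)

theorem cast_mod (n : ℕ) : ((n % p : ℕ) : A) = n := by
  conv_rhs => rw [← Nat.mod_add_div n p]
  simp [CharP.cast_eq_zero]

theorem length_addm (c : ℕ) (b r : List ℕ) (h : b.length = r.length) :
    (addm p c b r).length = r.length := by
  induction b generalizing r with
  | nil => cases r <;> simp_all [addm]
  | cons x xs ih => cases r <;> simp_all [addm]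

theorem ev_addm (c : ℕ) (b r : List ℕ) (h : b.length = r.length) :
    ev a (addm p c b r) = c * ev a b + ev a r := by
  induction b generalizing r with
  | nil => cases r <;> simp_all [addm, ev]
  | cons x xs ih =>
    cases r with
    | nil => simp at h
    | cons y ys =>
      simp only [addm, ev, cast_mod, ih ys (by simpa using h)]
      push_cast
      ring

theorem length_sh (t prev : ℕ) (n r : List ℕ) (h : n.length = r.length) :
    (sh p t prev n r).length = r.length := by
  induction n generalizing r prev with
  | nil => cases r <;> simp_all [sh]
  | cons x xs ih => cases r <;> simp_all [sh]

theorem ev_sh (t prev : ℕ) (n r : List ℕ) (h : n.length = r.length) :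
    ev a (sh p t prev n r) + a ^ n.length * (r.getLastD prev : ℕ) =
      prev + a * ev a r + t * ev a n := by
  induction n generalizing r prev with
  | nil => cases r <;> simp_all [sh, ev]
  | cons x xs ih =>
    cases r with
    | nil => simp at h
    | cons y ys =>
      have := ih y ys (by simpa using h)
      simp only [sh, ev, cast_mod, List.length_cons, List.getLastD_cons]
      push_cast
      linear_combination a * this

variable {ng : List ℕ}

theorem length_mulp (c b : List ℕ) (hb : b.length = ng.length) :
    (mulp p ng c b).length = ng.length := by
  induction c with
  | nil => simpa [mulp] using hb
  | cons x xs ih =>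
    simp only [mulp, forceL_eq]
    rw [length_addm, length_sh] <;> simp [ih, length_sh, hb]

theorem ev_zero (b : List ℕ) : ev a (b.map fun _ => 0) = 0 := by
  induction b with
  | nil => rfl
  | cons x xs ih => simp [ev] at ih ⊢; simp [ih]

theorem ev_mulp (hng : a ^ ng.length = ev a ng) (c b : List ℕ) (hb : b.length = ng.length) :
    ev a (mulp p ng c b) = ev a c * ev a b := by
  induction c with
  | nil => rw [mulp, ev_zero]; simp [ev]
  | cons x xs ih =>
    have hl := length_mulp p (ng := ng) xs b hb
    have := ev_sh p a ((mulp p ng xs b).getLastD 0) 0 ng _ hl.symm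
    simp only [mulp, forceL_eq]
    rw [ev_addm _ _ _ _ _ (by rw [length_sh, hl, hb]; rw [hl])]
    rw [ih] at this
    simp only [ev]
    push_cast at this
    rw [hng] at this
    linear_combination this

theorem powb_spec (hng : a ^ ng.length = ev a ng) (one : List ℕ) (h1 : one.length = ng.length)
    (h1' : ev a one = 1) (bs : List Bool) (l : List ℕ) (hl : l.length = ng.length) :
    (powb p ng one bs l).length = ng.length ∧ ev a (powb p ng one bs l) = ev a l ^ bval bs := by
  induction bs with
  | nil => simp [powb, h1, h1', bval]
  | cons b bs ih =>
    obtain ⟨i1, i2⟩ := ih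
    simp only [powb, forceL_eq]
    cases b
    · refine ⟨length_mulp p _ _ i1, ?_⟩
      rw [ev_mulp p a hng _ _ i1, i2, bval]; ring
    · refine ⟨length_mulp p _ _ hl, ?_⟩
      rw [ev_mulp p a hng _ _ hl, ev_mulp p a hng _ _ i1, i2, bval]; ring

theorem app_spec (hng : a ^ ng.length = ev a ng) (zero : List ℕ) (h0 : zero.length = ng.length)
    (h0' : ev a zero = 0) (h : List ℕ) (hh : h.length = ng.length) (l R : List ℕ)
    (hR : R.length = ng.length) :
    (app p zero (rows p ng h l.length R) l).length = ng.length ∧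
      ev a (app p zero (rows p ng h l.length R) l) = ev a R * ev (ev a h) l := by
  induction l generalizing R with
  | nil => simp [app, rows, ev, h0, h0']
  | cons c cs ih =>
    have hm := length_mulp p (ng := ng) R h hh
    obtain ⟨i1, i2⟩ := ih _ hm
    simp only [rows, app, forceL_eq, List.length_cons]
    refine ⟨by rw [length_addm] <;> simp [hR, i1], ?_⟩
    rw [ev_addm _ _ _ _ _ (by rw [hR, i1]), i2, ev_mulp p a hng _ _ hh, ev]
    ring

theorem ev_pow [Fact p.Prime] (l : List ℕ) : ev a l ^ p = ev (a ^ p) l := by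
  induction l with
  | nil => simp [ev, (Fact.out : p.Prime).ne_zero]
  | cons c cs ih =>
    have := ExpChar.prime (R := A) (Fact.out : p.Prime)
    rw [ev, ev, add_pow_expChar, mul_pow, ih]
    congr 1
    have := congrArg (ZMod.castHom (dvd_refl p) A) (ZMod.pow_card (c : ZMod p))
    rwa [map_pow, map_natCast] at this

theorem frob_spec [Fact p.Prime] (hng : a ^ ng.length = ev a ng) (zero one h : List ℕ)
    (Rs : List (List ℕ)) (h0 : zero.length = ng.length)
    (h0' : ev a zero = 0) (h1 : one.length = ng.length)
    (h1' : ev a one = 1) (hh : h.length = ng.length) (hh' : ev a h = a ^ p)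
    (hRs : rows p ng h ng.length one = Rs)
    (k : ℕ) (l : List ℕ) (hl : l.length = ng.length) :
    (frob p zero Rs k l).length = ng.length ∧
      ev a (frob p zero Rs k l) = ev a l ^ (p ^ k) := by
  induction k generalizing l with
  | zero => simp [frob, hl]
  | succ k ih =>
    obtain ⟨i1, i2⟩ := app_spec p a hng zero h0 h0' h hh l one h1
    rw [hl, hRs] at i1 i2
    rw [h1', one_mul, hh', ← ev_pow] at i2
    obtain ⟨j1, j2⟩ := ih _ i1
    simp only [frob, forceL_eq]
    refine ⟨j1, ?_⟩
    rw [j2, i2, ← pow_mul, pow_succ']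

end semantics

/-- the residue `0` -/
def zeroL : List ℕ := [0, 0, 0, 0, 0, 0, 0, 0, 0, 0, 0, 0, 0, 0, 0, 0]
/-- the residue `1` -/
def oneL : List ℕ := [1, 0, 0, 0, 0, 0, 0, 0, 0, 0, 0, 0, 0, 0, 0, 0]
/-- the residue `X` -/
def xL : List ℕ := [0, 1, 0, 0, 0, 0, 0, 0, 0, 0, 0, 0, 0, 0, 0, 0]

/-- minus the lower part of the modulus, mod 41 -/
def ng41 : List ℕ := [35, 19, 9, 33, 21, 21, 3, 22, 14, 25, 3, 19, 22, 40, 28, 31]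
/-- minus the lower part of the modulus, mod 23 -/
def ng23 : List ℕ := [7, 20, 17, 6, 20, 13, 20, 14, 3, 3, 13, 16, 19, 4, 16, 3]
/-- X^(41^3) -/
def h41 : List ℕ := [37, 34, 26, 6, 15, 13, 5, 5, 20, 37, 14, 5, 11, 28, 0, 13]
/-- X^(23^8) -/
def h23 : List ℕ := [16, 15, 13, 21, 9, 1, 15, 18, 12, 11, 15, 0, 18, 9, 19, 20]
/-- X^(23^8) - X -/
def d23 : List ℕ := [16, 14, 13, 21, 9, 1, 15, 18, 12, 11, 15, 0, 18, 9, 19, 20]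
/-- inverse of X^(23^8) - X -/
def u23 : List ℕ := [19, 9, 13, 9, 3, 20, 15, 9, 0, 3, 10, 14, 21, 21, 15, 18]
/-- X^41 -/
def f41 : List ℕ := [37, 32, 10, 39, 22, 40, 27, 25, 29, 33, 12, 37, 0, 7, 18, 23]
/-- powers of X^41 -/
def R41 : List (List ℕ) := [[1, 0, 0, 0, 0, 0, 0, 0, 0, 0, 0, 0, 0, 0, 0, 0],
  [37, 32, 10, 39, 22, 40, 27, 25, 29, 33, 12, 37, 0, 7, 18, 23],
  [25, 0, 37, 32, 30, 39, 32, 4, 27, 36, 9, 21, 34, 11, 22, 37],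
  [20, 11, 17, 8, 38, 5, 4, 31, 3, 19, 14, 17, 8, 40, 32, 21],
  [17, 28, 15, 21, 32, 33, 11, 9, 38, 24, 31, 28, 22, 21, 16, 24],
  [24, 40, 18, 15, 13, 21, 17, 29, 20, 12, 31, 31, 37, 22, 32, 12],
  [13, 1, 39, 23, 24, 39, 37, 33, 35, 11, 30, 30, 1, 28, 7, 33],
  [35, 38, 37, 35, 10, 36, 23, 12, 27, 3, 35, 19, 23, 20, 11, 13],
  [8, 12, 40, 27, 16, 15, 32, 35, 6, 37, 23, 26, 16, 1, 13, 36],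
  [40, 14, 6, 39, 30, 21, 4, 13, 27, 7, 12, 31, 29, 1, 30, 23],
  [10, 0, 38, 0, 32, 19, 25, 11, 12, 30, 15, 13, 16, 30, 33, 14],
  [11, 10, 9, 2, 9, 24, 16, 39, 23, 17, 12, 37, 20, 30, 1, 39],
  [32, 23, 14, 12, 11, 36, 32, 8, 27, 34, 38, 36, 7, 19, 5, 30],
  [24, 21, 7, 31, 35, 36, 24, 35, 9, 22, 0, 28, 12, 5, 11, 17],
  [2, 26, 2, 22, 24, 14, 31, 18, 30, 31, 5, 26, 11, 40, 36, 3],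
  [18, 19, 15, 7, 0, 28, 31, 26, 30, 8, 19, 40, 23, 7, 22, 35]]
/-- X^23 -/
def f23 : List ℕ := [20, 4, 11, 7, 14, 3, 19, 16, 6, 0, 21, 21, 0, 8, 8, 17]
/-- powers of X^23 -/
def R23 : List (List ℕ) := [[1, 0, 0, 0, 0, 0, 0, 0, 0, 0, 0, 0, 0, 0, 0, 0],
  [20, 4, 11, 7, 14, 3, 19, 16, 6, 0, 21, 21, 0, 8, 8, 17],
  [9, 3, 4, 16, 4, 5, 2, 21, 8, 17, 12, 7, 19, 10, 4, 9],
  [14, 2, 20, 7, 19, 0, 17, 10, 12, 17, 15, 14, 22, 2, 1, 6],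
  [7, 2, 21, 5, 5, 9, 4, 16, 19, 19, 10, 12, 8, 18, 7, 16],
  [22, 14, 7, 16, 4, 1, 7, 12, 16, 10, 18, 14, 15, 2, 19, 16],
  [4, 2, 9, 5, 16, 8, 3, 14, 6, 22, 10, 20, 4, 9, 2, 1],
  [17, 8, 8, 5, 9, 18, 9, 12, 8, 0, 0, 11, 22, 4, 10, 20],
  [21, 21, 20, 9, 21, 3, 1, 10, 9, 8, 20, 8, 9, 18, 14, 3],
  [10, 10, 18, 5, 7, 16, 4, 0, 13, 8, 9, 11, 2, 0, 7, 17],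
  [14, 12, 12, 9, 5, 5, 19, 7, 16, 6, 17, 1, 14, 14, 2, 5],
  [16, 4, 14, 0, 19, 8, 2, 19, 2, 12, 5, 7, 19, 14, 2, 3],
  [8, 18, 16, 21, 19, 22, 0, 19, 7, 10, 20, 15, 0, 1, 12, 4],
  [1, 17, 13, 19, 17, 18, 11, 5, 10, 17, 20, 10, 17, 3, 4, 9],
  [7, 6, 11, 15, 21, 12, 14, 22, 19, 7, 8, 0, 8, 1, 13, 17],
  [17, 13, 9, 16, 3, 21, 5, 0, 6, 21, 10, 8, 13, 20, 3, 21]]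

theorem pow41 : powb 41 ng41 oneL [true, false, false, true, false, true] xL = f41 := by
  decide +kernel

theorem rows41 : rows 41 ng41 f41 16 oneL = R41 := by
  decide +kernel

theorem frob41_39 : frob 41 zeroL R41 39 xL = xL := by
  decide +kernel

theorem frob41_3 : frob 41 zeroL R41 3 xL = h41 := by
  decide +kernel

theorem pow23 : powb 23 ng23 oneL [true, true, true, false, true] xL = f23 := by
  decide +kernel

theorem rows23 : rows 23 ng23 f23 16 oneL = R23 := by
  decide +kernel

theorem frob23_16 : frob 23 zeroL R23 16 xL = xL := by
  decide +kernel

theorem frob23_8 : frob 23 zeroL R23 8 xL = h23 := by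
  decide +kernel

theorem inv23 : mulp 23 ng23 u23 d23 = oneL := by
  decide +kernel

end FDelta

/-! ### The group-theoretic part -/

namespace FDelta

theorem exists_abelian_normal {G : Type*} [Group G] [Group.IsSolvable G] [Nontrivial G] :
    ∃ N : Subgroup G, N.Normal ∧ N ≠ ⊥ ∧ ∀ a ∈ N, ∀ b ∈ N, a * b = b * a := by
  classical
  have hs : ∃ n, derivedSeries G n = ⊥ := Group.IsSolvable.solvable
  obtain ⟨m, hm⟩ : ∃ m, Nat.find hs = m + 1 := by
    refine Nat.exists_eq_succ_of_ne_zero fun h => ?_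
    have := Nat.find_spec hs
    rw [h, derivedSeries_zero] at this
    exact top_ne_bot this
  have h1 := Nat.find_spec hs
  rw [hm, derivedSeries_succ] at h1
  refine ⟨derivedSeries G m, inferInstance, Nat.find_min hs (by omega), fun a ha b hb => ?_⟩
  have := Subgroup.commutator_mem_commutator ha hb
  rw [h1, Subgroup.mem_bot] at this
  exact commutatorElement_eq_one_iff_mul_comm.mp this

/-- An element of order dividing 13 fixes every point of an invariant set with fewer than 13
elements. -/
theorem fixed_of_small {G Y : Type*} [Group G] [MulAction G Y] (σ : G) (h13 : σ ^ 13 = 1)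
    (B : Set Y) (hB : ∀ y ∈ B, σ • y ∈ B) (hfin : B.Finite) (hcard : B.ncard < 13)
    (y : Y) (hy : y ∈ B) : σ • y = y := by
  by_contra hne
  have hper : Function.minimalPeriod (σ • · : Y → Y) y = 13 := by
    have hp : Function.IsPeriodicPt (σ • · : Y → Y) 13 y := by
      rw [Function.IsPeriodicPt, smul_iterate, h13]
      simp [Function.IsFixedPt]
    have := hp.minimalPeriod_dvd
    rcases (Nat.dvd_prime (by norm_num)).mp this with h | h
    · exact absurd (Function.minimalPeriod_eq_one_iff_isFixedPt.mp h) hne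
    · exact h
  have hpow : ∀ n : ℕ, (σ • · : Y → Y)^[n] y ∈ B := by
    intro n
    induction n with
    | zero => exact hy
    | succ n ih => rw [Function.iterate_succ_apply']; exact hB _ ih
  have hinj : Set.InjOn (fun n => (σ • · : Y → Y)^[n] y) (Finset.range 13 : Set ℕ) := by
    intro a ha b hb hab
    simp only [Finset.coe_range, Set.mem_Iio] at ha hb
    exact Function.iterate_injOn_Iio_minimalPeriod (by simp [hper, ha]) (by simp [hper, hb]) hab
  have := Set.ncard_le_ncard (s := (fun n => (σ • · : Y → Y)^[n] y) '' (Finset.range 13 : Set ℕ))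
    (t := B) (by rintro _ ⟨n, -, rfl⟩; exact hpow n) hfin
  rw [hinj.ncard_image, Set.ncard_coe_finset] at this
  simp at this
  omega

open MulAction Pointwise in
theorem not_solvable_of_order_thirteen {G Y : Type*} [Group G] [MulAction G Y] [FaithfulSMul G Y]
    [IsPretransitive G Y] (hY : Nat.card Y = 16) [Group.IsSolvable G] (σ : G)
    (h13 : σ ^ 13 = 1) (h1 : σ ≠ 1) : False := by
  have hfinY : Finite Y := Nat.finite_of_card_ne_zero (by omega)
  have : Fact (Nat.Prime 13) := ⟨by norm_num⟩
  have hord : orderOf σ = 13 := orderOf_eq_prime h13 h1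
  have : Nontrivial G := ⟨σ, 1, h1⟩
  obtain ⟨N, hN, hNbot, hcomm⟩ := exists_abelian_normal (G := G)
  -- `N` is transitive
  have htrans : ∀ y : Y, orbit N y = Set.univ := by
    by_contra hcon
    push Not at hcon
    obtain ⟨y, hy⟩ := hcon
    have hblk : ∀ z : Y, IsBlock G (orbit N z) := fun z => IsBlock.orbit_of_normal z
    have hsm : ∀ (g : G) (z : Y), g • orbit N z = orbit N (g • z) := fun g z =>
      smul_orbit_eq_orbit_smul N z g
    have hcd : ∀ z : Y, (orbit N z).ncard = (orbit N y).ncard := by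
      intro z
      obtain ⟨g, rfl⟩ := exists_smul_eq G y z
      rw [← hsm]
      exact Set.ncard_smul_set g _
    have hmul := (hblk y).ncard_block_mul_ncard_orbit_eq (nonempty_orbit y)
    rw [hY] at hmul
    have hlt : (orbit N y).ncard < 16 := by
      have := Set.ncard_lt_card hy
      omega
    have hne1 : (orbit N y).ncard ≠ 1 := by
      intro h
      apply hNbot
      rw [eq_bot_iff]
      intro n hn
      rw [Subgroup.mem_bot]
      apply FaithfulSMul.eq_of_smul_eq_smul (α := Y)
      intro z
      obtain ⟨w, hw⟩ := Set.ncard_eq_one.mp ((hcd z).trans h)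
      have e1 : z ∈ orbit N z := mem_orbit_self z
      have e2 : n • z ∈ orbit N z := ⟨⟨n, hn⟩, rfl⟩
      rw [hw] at e1 e2
      rw [one_smul, e2, e1]
    have hdvd : (orbit N y).ncard ∣ 16 := ⟨_, hmul.symm⟩
    have hle : (orbit N y).ncard ≤ 8 ∧ (orbit G (orbit N y)).ncard ≤ 8 := by
      generalize (orbit N y).ncard = d at *
      generalize (orbit G (orbit N y)).ncard = e at *
      constructor
      · interval_cases d <;> omega
      · have : d ≠ 0 := by rintro rfl; omega
        have : 2 ≤ d := by omega
        nlinarith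
    apply h1
    apply FaithfulSMul.eq_of_smul_eq_smul (α := Y)
    intro z
    rw [one_smul]
    have hfix : σ • orbit N z = orbit N z := by
      refine fixed_of_small σ h13 (orbit G (orbit N y)) ?_ (Set.toFinite _) (by omega) _ ?_
      · rintro _ ⟨g, rfl⟩
        exact ⟨σ * g, by simp [mul_smul]⟩
      · obtain ⟨g, rfl⟩ := exists_smul_eq G y z
        exact ⟨g, hsm g y⟩
    refine fixed_of_small σ h13 (orbit N z) ?_ (Set.toFinite _) (by rw [hcd]; omega) z
      (mem_orbit_self z)
    intro w hw
    rw [← hfix]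
    exact Set.smul_mem_smul_set hw
  -- the number of fixed points of `σ` is 3
  have hfp : Nat.card (fixedPoints (Subgroup.zpowers σ) Y) = 3 := by
    have hp : IsPGroup 13 (Subgroup.zpowers σ) :=
      IsPGroup.of_card (n := 1) (by rw [Nat.card_zpowers, hord, pow_one])
    have hmod := hp.card_modEq_card_fixedPoints Y
    have hle : Nat.card (fixedPoints (Subgroup.zpowers σ) Y) < 16 := by
      rw [← hY]
      apply Set.ncard_lt_card
      intro h
      apply h1
      apply FaithfulSMul.eq_of_smul_eq_smul (α := Y)
      intro z
      have : z ∈ fixedPoints (Subgroup.zpowers σ) Y := h ▸ Set.mem_univ z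
      rw [one_smul]
      exact this ⟨σ, Subgroup.mem_zpowers σ⟩
    rw [hY] at hmod
    unfold Nat.ModEq at hmod
    omega
  have hfix : ∀ y : Y, y ∈ fixedPoints (Subgroup.zpowers σ) Y ↔ σ • y = y := by
    intro y
    constructor
    · intro h
      exact h ⟨σ, Subgroup.mem_zpowers σ⟩
    · rintro h ⟨g, k, rfl⟩
      exact (Subgroup.zpowers_le (H := stabilizer G y)).mpr h ⟨k, rfl⟩
  obtain ⟨x₀, hx₀⟩ : (fixedPoints (Subgroup.zpowers σ) Y).Nonempty := by
    by_contra h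
    rw [Set.not_nonempty_iff_eq_empty] at h
    rw [h] at hfp
    simp at hfp
  rw [hfix] at hx₀
  -- `N` acts regularly
  have hreg : ∀ n ∈ N, ∀ m ∈ N, n • x₀ = m • x₀ → n = m := by
    intro n hn m hm h
    apply FaithfulSMul.eq_of_smul_eq_smul (α := Y)
    intro z
    obtain ⟨⟨g, hg⟩, rfl⟩ : z ∈ orbit N x₀ := by rw [htrans]; trivial
    change n • g • x₀ = m • g • x₀
    rw [← mul_smul, ← mul_smul, hcomm n hn g hg, hcomm m hm g hg, mul_smul, mul_smul, h]
  have hcardN : Nat.card N = 16 := by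
    rw [← hY]
    refine Nat.card_congr (Equiv.ofBijective (fun n : N => n • x₀) ⟨?_, ?_⟩)
    · intro n m h
      exact Subtype.ext (hreg n n.2 m m.2 h)
    · intro z
      have : z ∈ orbit N x₀ := by rw [htrans]; trivial
      exact this
  have hC : Nat.card (N ⊓ Subgroup.centralizer {σ} : Subgroup G) = 3 := by
    rw [← hfp]
    have key : ∀ n ∈ N, n ∈ Subgroup.centralizer {σ} ↔ σ • n • x₀ = n • x₀ := by
      intro n hn
      rw [Subgroup.mem_centralizer_singleton_iff]
      constructor
      · intro h
        rw [← mul_smul, ← h, mul_smul, hx₀]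
      · intro h
        have : (σ * n * σ⁻¹) • x₀ = n • x₀ := by
          rw [mul_smul, mul_smul, ← h]
          congr 2
          rw [inv_smul_eq_iff, hx₀]
        have := hreg _ (hN.conj_mem n hn σ) n hn this
        rw [mul_inv_eq_iff_eq_mul] at this
        exact this.symm
    refine Nat.card_congr (Equiv.ofBijective
      (fun n : (N ⊓ Subgroup.centralizer {σ} : Subgroup G) =>
        (⟨(n : G) • x₀, (hfix _).mpr ((key n n.2.1).mp n.2.2)⟩ :
          fixedPoints (Subgroup.zpowers σ) Y)) ⟨?_, ?_⟩)
    · intro n m h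
      exact Subtype.ext (hreg n n.2.1 m m.2.1 (congrArg Subtype.val h))
    · rintro ⟨z, hz⟩
      obtain ⟨⟨n, hn⟩, rfl⟩ : z ∈ orbit N x₀ := by rw [htrans]; trivial
      exact ⟨⟨n, hn, (key n hn).mpr ((hfix _).mp hz)⟩, rfl⟩
  have := Subgroup.card_dvd_of_le (inf_le_left : N ⊓ Subgroup.centralizer {σ} ≤ N)
  rw [hC, hcardN] at this
  omega

end FDelta

/-! ### Frobenius elements -/

namespace FDelta

open NumberField in
theorem exists_frob (K : Type) [Field K] [NumberField K] [IsGalois ℚ K] (p : ℕ) [Fact p.Prime] :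
    ∃ (F : Type) (_ : Field F) (_ : CharP F p) (π : 𝓞 K →+* F) (σ : K ≃ₐ[ℚ] K),
      ∀ x : 𝓞 K, π (σ • x) = π x ^ p := by
  have hpZ : Prime (p : ℤ) := Nat.prime_iff_prime_int.mp Fact.out
  have hP : (Ideal.span {(p : ℤ)}).IsPrime := (Ideal.span_singleton_prime hpZ.ne_zero).mpr hpZ
  obtain ⟨Q, hQp, hQ⟩ := Ideal.exists_ideal_over_prime_of_isIntegral_of_isDomain
    (S := 𝓞 K) (Ideal.span {(p : ℤ)})
    (by rw [(RingHom.injective_iff_ker_eq_bot _).mp (FaithfulSMul.algebraMap_injective ℤ (𝓞 K))]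
        exact bot_le)
  have hmemQ : ((p : ℕ) : 𝓞 K) ∈ Q := by
    have : (p : ℤ) ∈ Q.comap (algebraMap ℤ (𝓞 K)) := by
      rw [hQ]; exact Ideal.mem_span_singleton_self _
    simpa using this
  have hQ0 : Q ≠ ⊥ := by
    rintro rfl
    rw [Ideal.mem_bot] at hmemQ
    exact (Fact.out : p.Prime).ne_zero (by exact_mod_cast hmemQ)
  have hQm : Q.IsMaximal := hQp.isMaximal hQ0
  have hfin : Finite (𝓞 K ⧸ Q) := Ideal.finiteQuotientOfFreeOfNeBot Q hQ0
  have hinv : Algebra.IsInvariant ℤ (𝓞 K) (K ≃ₐ[ℚ] K) := by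
    infer_instance
  obtain ⟨σ, hσ⟩ := IsArithFrobAt.exists_of_isInvariant ℤ (K ≃ₐ[ℚ] K) Q
  have hcard : Nat.card (ℤ ⧸ Q.under ℤ) = p := by
    have : Q.under ℤ = Ideal.span {(p : ℤ)} := hQ
    rw [this, Nat.card_congr (Int.quotientSpanNatEquivZMod p).toEquiv, Nat.card_zmod]
  refine ⟨𝓞 K ⧸ Q, Ideal.Quotient.field Q, ?_, Ideal.Quotient.mk Q, σ, fun x => ?_⟩
  · have h0 : ((p : ℕ) : 𝓞 K ⧸ Q) = 0 := by
      rw [← map_natCast (Ideal.Quotient.mk Q), Ideal.Quotient.eq_zero_iff_mem]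
      exact hmemQ
    have := CharP.ringChar_of_prime_eq_zero (Fact.out : p.Prime) h0
    rw [← this]
    exact ringChar.charP _
  · have := hσ.mk_apply x
    rw [hcard] at this
    exact this

end FDelta

/-! ### The polynomial -/

namespace FDelta

open Polynomial NumberField

/-- The monic integral polynomial whose roots are `6 * r`, for `r` the roots of `f_δ`. -/
noncomputable def Gz : ℤ[X] :=
  X ^ 16 - 72 * X ^ 15 + 2514 * X ^ 14 - 56538 * X ^ 13 + 915795 * X ^ 12 -
      11299824 * X ^ 11 + 109430514 * X ^ 10 - 844498386 * X ^ 9 + 5223847788 * X ^ 8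
      - 25869970512 * X ^ 7 + 101775701664 * X ^ 6 - 313274667366 * X ^ 5 +
      735729164262 * X ^ 4 - 1265731966818 * X ^ 3 + 1488046491702 * X ^ 2 -
      1047412815372 * X + 322453421073

theorem Gz_natDegree : Gz.natDegree = 16 := by
  unfold Gz; compute_degree!

theorem Gz_monic : Gz.Monic := by
  unfold Gz; monicity!

theorem Gz_aeval {A : Type*} [CommRing A] (a : A) : aeval a Gz =
      a ^ 16 - 72 * a ^ 15 + 2514 * a ^ 14 - 56538 * a ^ 13 + 915795 * a ^ 12 -
      11299824 * a ^ 11 + 109430514 * a ^ 10 - 844498386 * a ^ 9 + 5223847788 * a ^ 8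
      - 25869970512 * a ^ 7 + 101775701664 * a ^ 6 - 313274667366 * a ^ 5 +
      735729164262 * a ^ 4 - 1265731966818 * a ^ 3 + 1488046491702 * a ^ 2 -
      1047412815372 * a + 322453421073 := by
  simp only [Gz, map_add, map_sub, map_mul, map_pow, aeval_X, map_ofNat]

theorem root41 {A : Type*} [CommRing A] [CharP A 41] (a : A) (h : aeval a Gz = 0) :
    a ^ ng41.length = ev a ng41 := by
  have hp : (41 : A) = 0 := by exact_mod_cast CharP.cast_eq_zero A 41
  rw [Gz_aeval] at h
  simp only [ng41, ev, List.length_cons, List.length_nil]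
  push_cast
  linear_combination h - (-a ^ 15 + 62 * a ^ 14 - 1378 * a ^ 13 + 22337 * a ^ 12 - 275605 * a ^ 11 +
      2669037 * a ^ 10 - 20597521 * a ^ 9 + 127410922 * a ^ 8 - 630974890 * a ^ 7 +
      2482334187 * a ^ 6 - 7640845545 * a ^ 5 + 17944613763 * a ^ 4 - 30871511385 * a
      ^ 3 + 36293816871 * a ^ 2 - 25546654033 * a + 7864717588) * hp

theorem root23 {A : Type*} [CommRing A] [CharP A 23] (a : A) (h : aeval a Gz = 0) :
    a ^ ng23.length = ev a ng23 := by
  have hp : (23 : A) = 0 := by exact_mod_cast CharP.cast_eq_zero A 23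
  rw [Gz_aeval] at h
  simp only [ng23, ev, List.length_cons, List.length_nil]
  push_cast
  linear_combination h - (-3 * a ^ 15 + 110 * a ^ 14 - 2458 * a ^ 13 + 39818 * a ^ 12 - 491296 * a ^ 11 +
      4757849 * a ^ 10 - 36717321 * a ^ 9 + 227123817 * a ^ 8 - 1124781326 * a ^ 7 +
      4425030508 * a ^ 6 - 13620637711 * a ^ 5 + 31988224534 * a ^ 4 - 55031824644 * a
      ^ 3 + 64697673553 * a ^ 2 - 45539687624 * a + 14019713960) * hp

instance : Fact (Nat.Prime 41) := ⟨by norm_num⟩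
instance : Fact (Nat.Prime 23) := ⟨by norm_num⟩

theorem ev_zeroL {A : Type*} [CommRing A] (a : A) : ev a zeroL = 0 := by simp [ev, zeroL]
theorem ev_oneL {A : Type*} [CommRing A] (a : A) : ev a oneL = 1 := by simp [ev, oneL]
theorem ev_xL {A : Type*} [CommRing A] (a : A) : ev a xL = a := by simp [ev, xL]

theorem iter41 {A : Type*} [CommRing A] [CharP A 41] (a : A) (h : aeval a Gz = 0) (k : ℕ) :
    ev a (frob 41 zeroL R41 k xL) = a ^ (41 ^ k) := by
  have hr := root41 a h
  have h1 := (powb_spec 41 a hr oneL rfl (ev_oneL a)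
    [true, false, false, true, false, true] xL rfl).2
  rw [pow41, ev_xL] at h1
  have h2 := (frob_spec 41 a hr zeroL oneL f41 R41 rfl (ev_zeroL a) rfl (ev_oneL a) rfl h1
    rows41 k xL rfl).2
  rwa [ev_xL] at h2

theorem iter23 {A : Type*} [CommRing A] [CharP A 23] (a : A) (h : aeval a Gz = 0) (k : ℕ) :
    ev a (frob 23 zeroL R23 k xL) = a ^ (23 ^ k) := by
  have hr := root23 a h
  have h1 := (powb_spec 23 a hr oneL rfl (ev_oneL a)
    [true, true, true, false, true] xL rfl).2
  rw [pow23, ev_xL] at h1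
  have h2 := (frob_spec 23 a hr zeroL oneL f23 R23 rfl (ev_zeroL a) rfl (ev_oneL a) rfl h1
    rows23 k xL rfl).2
  rwa [ev_xL] at h2

theorem per41 {A : Type*} [CommRing A] [CharP A 41] (a : A) (h : aeval a Gz = 0) :
    a ^ (41 ^ 39) = a := by
  rw [← iter41 a h, frob41_39, ev_xL]

theorem per23 {A : Type*} [CommRing A] [CharP A 23] (a : A) (h : aeval a Gz = 0) :
    a ^ (23 ^ 16) = a := by
  rw [← iter23 a h, frob23_16, ev_xL]

theorem not_per23 {F : Type*} [Field F] [CharP F 23] (a : F) (h : aeval a Gz = 0) :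
    a ^ (23 ^ 8) ≠ a := by
  rw [← iter23 a h, frob23_8]
  intro hc
  have h1 := ev_mulp 23 a (root23 a h) u23 d23 rfl
  have h2 : ev a d23 = ev a h23 - a := by
    simp only [ev, d23, h23]; push_cast; ring
  rw [inv23, ev_oneL, h2, hc, sub_self, mul_zero] at h1
  exact one_ne_zero h1

theorem not_per41 {F : Type*} [Field F] [CharP F 41] (s : Finset F) (hs : s.card = 16)
    (h : ∀ a ∈ s, aeval a Gz = 0) (hper : ∀ a ∈ s, a ^ (41 ^ 3) = a) : False := by
  have hev : ∀ a : F, (ev (X : F[X]) h41 - X).eval a = ev a h41 - a := by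
    intro a
    simp [ev, h41]
  have h0 : ev (X : F[X]) h41 - X = 0 := by
    apply eq_zero_of_natDegree_lt_card_of_eval_eq_zero' _ s
    · intro a ha
      rw [hev, ← frob41_3, iter41 a (h a ha), hper a ha, sub_self]
    · rw [hs, Nat.lt_succ_iff]
      simp only [ev, h41, mul_zero, add_zero]
      compute_degree
  have h1 := hev 0
  rw [h0] at h1
  simp [ev, h41] at h1
  have h2 : ((37 : ℕ) : F) = 0 := by exact_mod_cast h1.symm
  rw [CharP.cast_eq_zero_iff F 41] at h2
  omega

theorem separable_of_per {F : Type} [Field F] (p n : ℕ) [Fact p.Prime] [CharP F p] (hn : n ≠ 0)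
    (hper : ∀ (A : Type) [CommRing A] [CharP A p] (a : A), aeval a Gz = 0 → a ^ (p ^ n) = a) :
    (Gz.map (Int.castRingHom F)).Separable := by
  apply (galois_poly_separable (K := F) p (p ^ n) (dvd_pow_self p hn)).of_dvd
  have hd : (Gz.map (Int.castRingHom F)).degree ≠ 0 := by
    rw [Gz_monic.degree_map, degree_eq_natDegree Gz_monic.ne_zero, Gz_natDegree]
    norm_num
  have : Nontrivial (AdjoinRoot (Gz.map (Int.castRingHom F))) := AdjoinRoot.nontrivial _ hd
  have : CharP (AdjoinRoot (Gz.map (Int.castRingHom F))) p :=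
    charP_of_injective_algebraMap (algebraMap F _).injective p
  have h := hper _ (AdjoinRoot.root (Gz.map (Int.castRingHom F))) (by
    have := AdjoinRoot.eval₂_root (Gz.map (Int.castRingHom F))
    rw [eval₂_map] at this
    rw [aeval_def, ← this]
    congr 1)
  rw [← AdjoinRoot.mk_eq_zero]
  simp [h]

section action
variable {K : Type} [Field K] [NumberField K]

/-- The roots of the polynomial in the ring of integers. -/
def Rts (K : Type) [Field K] [NumberField K] : Type := {y : 𝓞 K // aeval y Gz = 0}

instance : MulAction (K ≃ₐ[ℚ] K) (Rts K) where
  smul σ y := ⟨σ • y.1, by rw [aeval_smul, y.2, smul_zero]⟩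
  one_smul y := Subtype.ext (one_smul _ y.1)
  mul_smul σ τ y := Subtype.ext (mul_smul σ τ y.1)

theorem smul_val (σ : K ≃ₐ[ℚ] K) (y : Rts K) : (σ • y).1 = σ • y.1 := rfl

theorem splits_int (hs : (Gz.map (Int.castRingHom K)).Splits) :
    (Gz.map (Int.castRingHom (𝓞 K))).Splits := by
  apply Splits.of_splits_map_of_injective (i := algebraMap (𝓞 K) K)
    (FaithfulSMul.algebraMap_injective _ _)
  · rw [Polynomial.map_map]
    have e : (algebraMap (𝓞 K) K).comp (Int.castRingHom (𝓞 K)) = Int.castRingHom K :=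
      RingHom.ext_int _ _
    rw [e]
    exact hs
  · intro a ha
    rw [Polynomial.map_map, mem_roots', IsRoot, eval_map] at ha
    have hInt : IsIntegral ℤ a := ⟨Gz, Gz_monic, by
      rw [← ha.2]
      congr 1⟩
    exact ⟨⟨a, hInt⟩, rfl⟩

theorem mem_roots_int (y : 𝓞 K) :
    y ∈ (Gz.map (Int.castRingHom (𝓞 K))).roots ↔ aeval y Gz = 0 := by
  rw [mem_roots (Gz_monic.map _).ne_zero, IsRoot, eval_map, aeval_def]
  rfl

theorem reduction (hs : (Gz.map (Int.castRingHom K)).Splits) {F : Type} [Field F]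
    (π : 𝓞 K →+* F) (hsep : (Gz.map (Int.castRingHom F)).Separable) :
    Nat.card (Rts K) = 16 ∧ Function.Injective (fun y : Rts K => π y.1) := by
  classical
  have hsi := splits_int hs
  have hm : (Gz.map (Int.castRingHom (𝓞 K))).map π = Gz.map (Int.castRingHom F) := by
    rw [Polynomial.map_map]
    congr 1
    exact RingHom.ext_int _ _
  have hr := hsi.roots_map_of_ne_zero (φ := π) (by rw [hm]; exact (Gz_monic.map _).ne_zero)
  rw [hm] at hr
  have hnd := nodup_roots hsep
  rw [hr] at hnd
  have hnd' := Multiset.Nodup.of_map _ hnd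
  constructor
  · have hc := hsi.natDegree_eq_card_roots
    rw [Gz_monic.natDegree_map, Gz_natDegree] at hc
    rw [hc, ← Multiset.toFinset_card_of_nodup hnd', ← Fintype.card_coe,
      ← Nat.card_eq_fintype_card]
    exact Nat.card_congr (Equiv.subtypeEquivRight fun y => by
      rw [Multiset.mem_toFinset, mem_roots_int])
  · intro y z h
    exact Subtype.ext (Multiset.inj_on_of_nodup_map hnd _ ((mem_roots_int _).mpr y.2) _
      ((mem_roots_int _).mpr z.2) h)

theorem reduction_pow {F : Type} [Field F] (π : 𝓞 K →+* F) (σ : K ≃ₐ[ℚ] K) (p : ℕ)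
    (hσ : ∀ x : 𝓞 K, π (σ • x) = π x ^ p) (k : ℕ) (y : 𝓞 K) :
    π (σ ^ k • y) = π y ^ (p ^ k) := by
  induction k with
  | zero => simp
  | succ k ih => rw [pow_succ', mul_smul, hσ, ih, ← pow_mul, pow_succ]

theorem aeval_reduction {F : Type} [Field F] (π : 𝓞 K →+* F) (y : Rts K) :
    aeval (π y.1) Gz = 0 := by
  have := congrArg π y.2
  rw [map_zero] at this
  rw [← this]
  exact (aeval_algHom_apply (RingHom.toIntAlgHom π) y.1 Gz)

theorem core [IsGalois ℚ K] (hs : (Gz.map (Int.castRingHom K)).Splits)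
    (hfaith : ∀ σ : K ≃ₐ[ℚ] K, (∀ y : Rts K, σ • y = y) → σ = 1)
    [Group.IsSolvable (K ≃ₐ[ℚ] K)] : False := by
  classical
  have hF : FaithfulSMul (K ≃ₐ[ℚ] K) (Rts K) := by
    refine ⟨fun {σ τ} h => ?_⟩
    have := hfaith (τ⁻¹ * σ) fun y => by rw [mul_smul, h, inv_smul_smul]
    exact (inv_mul_eq_one.mp this).symm
  obtain ⟨F, _, _, π, φ, hφ⟩ := exists_frob K 23
  obtain ⟨E, _, _, ρ, ψ, hψ⟩ := exists_frob K 41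
  obtain ⟨hcard, hinj⟩ := reduction hs π
    (separable_of_per 23 16 (by norm_num) fun A _ _ a h => per23 a h)
  obtain ⟨-, hinj'⟩ := reduction hs ρ
    (separable_of_per 41 39 (by norm_num) fun A _ _ a h => per41 a h)
  have hfin : Finite (Rts K) := Nat.finite_of_card_ne_zero (by omega)
  have : Fintype (Rts K) := Fintype.ofFinite _
  have htr : MulAction.IsPretransitive (K ≃ₐ[ℚ] K) (Rts K) := by
    rw [MulAction.isPretransitive_iff]
    intro x y
    have hmin : Function.minimalPeriod (φ • · : Rts K → Rts K) x = 2 ^ (3 + 1) := by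
      apply Function.minimalPeriod_eq_prime_pow
      · rw [Function.IsPeriodicPt, smul_iterate, Function.IsFixedPt]
        intro h
        have := congrArg (fun y : Rts K => π y.1) h
        simp only [smul_val, reduction_pow π φ 23 hφ] at this
        exact not_per23 _ (aeval_reduction π x) this
      · rw [Function.IsPeriodicPt, smul_iterate, Function.IsFixedPt]
        apply hinj
        simp only [smul_val, reduction_pow π φ 23 hφ]
        exact per23 _ (aeval_reduction π x)
    rw [MulAction.minimalPeriod_eq_card, ← Nat.card_eq_fintype_card] at hmin
    have huniv : MulAction.orbit (Subgroup.zpowers φ) x = Set.univ := by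
      by_contra hne
      have := Set.ncard_lt_card hne
      rw [hcard] at this
      change Set.ncard _ = _ at hmin
      omega
    obtain ⟨g, hg⟩ : y ∈ MulAction.orbit (Subgroup.zpowers φ) x := by rw [huniv]; trivial
    exact ⟨g, hg⟩
  refine not_solvable_of_order_thirteen hcard (ψ ^ 3) ?_ ?_
  · apply hfaith
    intro y
    apply hinj'
    simp only [← pow_mul, smul_val, reduction_pow ρ ψ 41 hψ]
    exact per41 _ (aeval_reduction ρ y)
  · intro h1
    refine not_per41 (Finset.univ.image fun y : Rts K => ρ y.1) ?_ ?_ ?_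
    · rw [Finset.card_image_of_injective _ hinj', Finset.card_univ, ← Nat.card_eq_fintype_card,
        hcard]
    · intro a ha
      obtain ⟨y, -, rfl⟩ := Finset.mem_image.mp ha
      exact aeval_reduction ρ y
    · intro a ha
      obtain ⟨y, -, rfl⟩ := Finset.mem_image.mp ha
      rw [← reduction_pow ρ ψ 41 hψ, h1, one_smul]

end action

end FDelta

namespace FDelta

open Polynomial NumberField

theorem Gz_comp : (Gz.map (Int.castRingHom ℚ)).comp (6 * X) * 589824 = 6 ^ 16 * fdeltaQ := by
  simp only [Gz, fdeltaQ, Polynomial.map_add, Polynomial.map_sub, Polynomial.map_mul,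
    Polynomial.map_pow, Polynomial.map_X, Polynomial.map_ofNat, add_comp, sub_comp, mul_comp,
    pow_comp, X_comp, ofNat_comp]
  ring

theorem Gz_splits : (Gz.map (Int.castRingHom fdeltaQ.SplittingField)).Splits := by
  have h := congrArg (fun P : ℚ[X] => P.comp (C (1 / 6) * X)) Gz_comp
  have h6 : (6 : ℚ[X]) = C 6 := rfl
  have e : (6 * X : ℚ[X]).comp (C (1 / 6) * X) = X := by
    rw [h6, mul_comp, C_comp, X_comp, ← mul_assoc, ← C_mul]
    norm_num
  have h60 : (6 ^ 16 : ℚ[X]) = C (6 ^ 16) := by rw [h6, C_pow]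
  have h70 : (589824 : ℚ[X]) = C 589824 := rfl
  simp only [h60, h70] at h
  rw [mul_comp, comp_assoc, e, comp_X, mul_comp, C_comp, C_comp, ← h60, ← h70] at h
  have h2 : Gz.map (Int.castRingHom ℚ) =
      C (6 ^ 16 / 589824) * fdeltaQ.comp (C (1 / 6) * X) := by
    have h7 : (589824 : ℚ[X]) = C 589824 := rfl
    have h8 : (C (6 ^ 16 / 589824) : ℚ[X]) * C 589824 = 6 ^ 16 := by
      rw [h6, ← C_pow, ← C_mul]; norm_num
    have h9 : (C 589824 : ℚ[X]) ≠ 0 := by simp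
    apply mul_right_cancel₀ h9
    rw [← h7, h, h7, mul_right_comm, h8]
  have h3 : Gz.map (Int.castRingHom fdeltaQ.SplittingField) =
      (Gz.map (Int.castRingHom ℚ)).map (algebraMap ℚ fdeltaQ.SplittingField) := by
    rw [Polynomial.map_map]
    congr 1
  rw [h3, h2, Polynomial.map_mul, Polynomial.map_comp, map_C]
  refine (Splits.C _).mul ?_
  refine Splits.comp_of_natDegree_le_one (SplittingField.splits fdeltaQ) ?_
  simp only [Polynomial.map_mul, map_C, map_X]
  exact (natDegree_C_mul_le _ _).trans natDegree_X_le

theorem core' {K : Type} [Field K] [inst : Algebra ℚ K] [FiniteDimensional ℚ K] [IsGalois ℚ K]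
    (hs : (Gz.map (Int.castRingHom K)).Splits)
    (hfaith : ∀ σ : K ≃ₐ[ℚ] K, (∀ x : K, aeval x fdeltaQ = 0 → σ x = x) → σ = 1)
    (hsol : Group.IsSolvable (K ≃ₐ[ℚ] K)) : False := by
  have hch : CharZero K := charZero_of_injective_algebraMap (algebraMap ℚ K).injective
  have hinst : inst = DivisionRing.toRatAlgebra := Subsingleton.elim _ _
  subst hinst
  have hnf : NumberField K := { }
  refine core hs ?_
  intro σ hσ
  apply hfaith
  intro x hx0
  have hG : aeval (6 * x) Gz = 0 := by
    rw [Gz_aeval]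
    simp only [fdeltaQ, map_add, map_sub, map_mul, map_pow, aeval_X, map_ofNat] at hx0
    linear_combination (6 ^ 16 / 589824) * hx0
  have hInt : IsIntegral ℤ (6 * x) := ⟨Gz, Gz_monic, hG⟩
  have h := congrArg (fun y : Rts K => ((y.1 : 𝓞 K) : K))
    (hσ ⟨⟨6 * x, hInt⟩, by
      apply RingOfIntegers.coe_injective
      rw [map_zero, ← hG]
      exact (aeval_algebraMap_apply K (⟨6 * x, hInt⟩ : 𝓞 K) Gz).symm⟩)
  have h' : σ (6 * x) = 6 * x := h
  rw [map_mul, map_ofNat] at h'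
  exact mul_left_cancel₀ (by norm_num) h'

theorem isGalois_split {k : Type} [Field k] [CharZero k] (f : k[X]) :
    IsGalois k f.SplittingField :=
  { to_isSeparable := inferInstance
    to_normal := Normal.of_isSplittingField f }

theorem finite_split {k : Type} [Field k] (f : k[X]) :
    FiniteDimensional k f.SplittingField := inferInstance

theorem faithful_split {k : Type} [Field k] (f : k[X])
    (σ : f.SplittingField ≃ₐ[k] f.SplittingField)
    (hσ : ∀ x : f.SplittingField, aeval x f = 0 → σ x = x) : σ = 1 :=
  Polynomial.Gal.ext (p := f) (σ := σ) (τ := 1) fun x hx =>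
    hσ x (Polynomial.mem_rootSet'.mp hx).2

end FDelta

/-- The Galois group of `f_δ` over ℚ (the Galois group of its splitting field over ℚ)
is not a solvable group. -/
theorem gal_fdelta_not_solvable : ¬ IsSolvable fdeltaQ.Gal := by
  intro hsol
  exact @FDelta.core' fdeltaQ.SplittingField _ _ (FDelta.finite_split fdeltaQ)
    (FDelta.isGalois_split fdeltaQ) FDelta.Gz_splits (FDelta.faithful_split fdeltaQ) hsol
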